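/- arXiv:1103.3179 — 4 statements merged into one kernel-verified Lean document; each statement's English description precedes it below -/
import Mathlib

section
/- Let Λ : ℕ → ℝ≥0∞ be monotone nondecreasing, let m be a natural number, and let t : ℕ → ℝ≥0∞ satisfy t i ≤ 1 for every i and ∑'_{i∈ℕ} t i = m. Then ∑'_{i∈ℕ} Λ i * t i ≥ ∑_{i=0}^{m-1} Λ i (sums taken in the extended nonnegative reals [0,∞]). -/
/-- Rearrangement inequality in `ℝ≥0∞`: if `Λ` is monotone nondecreasing, each weight
`t i` lies in `[0,1]`, and the weights total `m`, then the weighted sum of `Λ` is at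
least the sum of the `m` smallest values `Λ 0 + ⋯ + Λ (m-1)`. -/
theorem stmt0 (Λ : ℕ → ENNReal) (hΛ : Monotone Λ) (m : ℕ) (t : ℕ → ENNReal)
    (ht1 : ∀ i, t i ≤ 1) (htm : ∑' i, t i = m) :
    ∑ i ∈ Finset.range m, Λ i ≤ ∑' i, Λ i * t i := by
  have split : ∀ f : ℕ → ENNReal,
      ∑ i ∈ Finset.range m, f i + ∑' i, f (i + m) = ∑' i, f i := fun f =>
    Summable.sum_add_tsum_nat_add' ENNReal.summable
  have hfin : ∑ i ∈ Finset.range m, t i ≠ ⊤ := by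
    refine ne_top_of_le_ne_top (ENNReal.natCast_ne_top m) ?_
    rw [← htm]
    exact ENNReal.sum_le_tsum _
  have hone : ∑ i ∈ Finset.range m, t i + ∑ i ∈ Finset.range m, (1 - t i) = m := by
    rw [← Finset.sum_add_distrib]
    simp [add_tsub_cancel_of_le (ht1 _)]
  have htail : ∑ i ∈ Finset.range m, (1 - t i) = ∑' i, t (i + m) := by
    refine (ENNReal.add_right_inj hfin).1 ?_
    rw [hone, split t, htm]
  calc ∑ i ∈ Finset.range m, Λ i
      = ∑ i ∈ Finset.range m, Λ i * t i + ∑ i ∈ Finset.range m, Λ i * (1 - t i) := by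
        rw [← Finset.sum_add_distrib]
        refine Finset.sum_congr rfl fun i _ => ?_
        rw [← mul_add, add_tsub_cancel_of_le (ht1 i), mul_one]
    _ ≤ ∑ i ∈ Finset.range m, Λ i * t i + ∑ i ∈ Finset.range m, Λ m * (1 - t i) := by
        refine add_le_add le_rfl (Finset.sum_le_sum fun i hi => ?_)
        exact mul_le_mul_left (hΛ (Finset.mem_range.1 hi).le) _
    _ = ∑ i ∈ Finset.range m, Λ i * t i + ∑' i, Λ m * t (i + m) := by
        rw [← Finset.mul_sum, htail, ENNReal.tsum_mul_left]
    _ ≤ ∑ i ∈ Finset.range m, Λ i * t i + ∑' i, Λ (i + m) * t (i + m) := by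
        refine add_le_add le_rfl (ENNReal.tsum_le_tsum fun i => ?_)
        exact mul_le_mul_left (hΛ (Nat.le_add_left m i)) _
    _ = ∑' i, Λ i * t i := split fun i => Λ i * t i
end

section
/- Let H be a real Hilbert space, let (e_i)_{i∈ℕ} be a Hilbert basis of H (an orthonormal family whose span is dense), and let Λ : ℕ → ℝ be nonnegative and monotone nondecreasing. Then for every finite orthonormal family ω_1, …, ω_m in H one has ∑_{j=1}^{m} ∑'_{i∈ℕ} Λ i * ⟨ω_j, e_i⟩² ≥ ∑_{i=0}^{m-1} Λ i, where the inner sums of nonnegative terms are taken in the extended nonnegative reals [0,∞]. -/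
open scoped RealInnerProductSpace

/-- Trace lemma: if `(e i)` is a Hilbert basis of a real Hilbert space `H` and
`Λ : ℕ → ℝ` is nonnegative and monotone nondecreasing, then for any finite
orthonormal family `ω : Fin m → H` one has
`∑ j, ∑' i, Λ i * ⟪ω j, e i⟫² ≥ ∑_{i<m} Λ i`, inner sums in `ℝ≥0∞`. -/
theorem stmt1 {H : Type*} [NormedAddCommGroup H] [InnerProductSpace ℝ H]
    (e : HilbertBasis ℕ ℝ H) (Λ : ℕ → ℝ) (hΛ0 : ∀ i, 0 ≤ Λ i) (hΛ : Monotone Λ)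
    (m : ℕ) (ω : Fin m → H) (hω : Orthonormal ℝ ω) :
    ENNReal.ofReal (∑ i ∈ Finset.range m, Λ i) ≤
      ∑ j, ∑' i, ENNReal.ofReal (Λ i * ⟪ω j, e i⟫ ^ 2) := by
  have hw0 : ∀ i, 0 ≤ ∑ j, ⟪ω j, e i⟫ ^ 2 := fun i => Finset.sum_nonneg fun j _ => sq_nonneg _
  have hw1 : ∀ i, ∑ j, ⟪ω j, e i⟫ ^ 2 ≤ 1 := by
    intro i
    have h := hω.sum_inner_products_le (e i) (s := Finset.univ)
    have h1 : ‖e i‖ = 1 := e.orthonormal.1 i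
    simpa [h1] using h
  have hws : HasSum (fun i => ∑ j, ⟪ω j, e i⟫ ^ 2) (m : ℝ) := by
    have h : ∀ j ∈ (Finset.univ : Finset (Fin m)), HasSum (fun i => ⟪ω j, e i⟫ ^ 2) (1 : ℝ) := by
      intro j _
      have h := e.hasSum_inner_mul_inner (ω j) (ω j)
      have h1 : ‖ω j‖ = 1 := hω.1 j
      rw [real_inner_self_eq_norm_sq, h1, one_pow] at h
      have hf : (fun i => ⟪ω j, e i⟫ ^ 2) = fun i => ⟪ω j, e i⟫ * ⟪e i, ω j⟫ := by
        funext i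
        rw [real_inner_comm (ω j) (e i), sq]
      rw [hf]
      exact h
    simpa using hasSum_sum h
  have hc0 := hΛ0 m
  have hmin0 : ∀ i, 0 ≤ min (Λ i) (Λ m) * ∑ j, ⟪ω j, e i⟫ ^ 2 :=
    fun i => mul_nonneg (le_min (hΛ0 i) hc0) (hw0 i)
  have hsm : Summable (fun i => min (Λ i) (Λ m) * ∑ j, ⟪ω j, e i⟫ ^ 2) :=
    Summable.of_nonneg_of_le hmin0
      (fun i => mul_le_mul_of_nonneg_right (min_le_right _ _) (hw0 i)) (hws.summable.mul_left (Λ m))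
  have hd : HasSum (fun i => if i ∈ Finset.range m then Λ m - Λ i else 0)
      (∑ i ∈ Finset.range m, (Λ m - Λ i)) := by
    have h := hasSum_sum_of_ne_finset_zero (L := .unconditional ℕ) (s := Finset.range m)
      (f := fun i => if i ∈ Finset.range m then Λ m - Λ i else 0) (fun i hi => if_neg hi)
    rwa [Finset.sum_congr rfl (fun i hi => if_pos hi)] at h
  have key : ∑ i ∈ Finset.range m, Λ i ≤ ∑' i, min (Λ i) (Λ m) * ∑ j, ⟪ω j, e i⟫ ^ 2 := by
    have h := hasSum_le (fun i => ?_) ((hws.mul_left (Λ m)).sub hd) hsm.hasSum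
    · rw [Finset.sum_sub_distrib] at h
      simp only [Finset.sum_const, Finset.card_range, nsmul_eq_mul] at h
      linarith
    · by_cases hi : i < m
      · have hl := hΛ hi.le
        simp only [Finset.mem_range, hi, if_true, min_eq_left hl]
        nlinarith [mul_nonneg (sub_nonneg.2 hl) (sub_nonneg.2 (hw1 i))]
      · simp [hi, min_eq_right (hΛ (not_lt.1 hi))]
  calc _ ≤ ENNReal.ofReal (∑' i, min (Λ i) (Λ m) * ∑ j, ⟪ω j, e i⟫ ^ 2) :=
        ENNReal.ofReal_le_ofReal key
    _ = ∑' i, ENNReal.ofReal (min (Λ i) (Λ m) * ∑ j, ⟪ω j, e i⟫ ^ 2) :=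
        ENNReal.ofReal_tsum_of_nonneg hmin0 hsm
    _ ≤ ∑' i, ∑ j, ENNReal.ofReal (Λ i * ⟪ω j, e i⟫ ^ 2) := by
        refine ENNReal.tsum_le_tsum fun i => ?_
        rw [← ENNReal.ofReal_sum_of_nonneg (fun j _ => mul_nonneg (hΛ0 i) (sq_nonneg _)),
          ← Finset.mul_sum]
        exact ENNReal.ofReal_le_ofReal (mul_le_mul_of_nonneg_right (min_le_left _ _) (hw0 i))
    _ = _ := Summable.tsum_finsetSum fun j _ => ENNReal.summable
end

section
/- Let H be a real Hilbert space, let (e_i)_{i∈ℕ} be a Hilbert basis of H, let n ≥ 2 be a natural number, let C > 0, and let Λ : ℕ → ℝ be nonnegative, monotone nondecreasing and satisfy Λ i ≥ C * i^{1/(n-1)} for every i ∈ ℕ. Then for every finite orthonormal family ω_1, …, ω_m in H one has ∑_{j=1}^{m} ∑'_{i∈ℕ} Λ i * ⟨ω_j, e_i⟩² ≥ ((n-1)/(4n)) * C * (m^{1 + 1/(n-1)} − m), where the inner sums of nonnegative terms are taken in the extended nonnegative reals [0,∞]. -/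
open scoped RealInnerProductSpace

theorem aux_sum (p : ℝ) (hp0 : 0 < p) (hp1 : p ≤ 1) (m : ℕ) :
    (m : ℝ) ^ (1 + p) - m ≤ 4 * (1 + p) * ∑ i ∈ Finset.range m, (i : ℝ) ^ p := by
  induction m with
  | zero =>
    have : (1 + p) ≠ 0 := by positivity
    simp [Real.zero_rpow this]
  | succ k ih =>
    rw [Finset.sum_range_succ]
    rcases Nat.eq_zero_or_pos k with rfl | hk
    · simp [Real.zero_rpow hp0.ne']
    have hk1 : (1 : ℝ) ≤ k := by exact_mod_cast hk
    have hk0 : (0 : ℝ) < k := by linarith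
    have hq : 0 < (k : ℝ) ^ p := Real.rpow_pos_of_pos hk0 p
    have e1 : ((k : ℝ) + 1) ^ p ≤ (k : ℝ) ^ p * (1 + p / k) := by
      have h : (k : ℝ) + 1 = k * (1 + 1 / k) := by field_simp
      rw [h, Real.mul_rpow hk0.le (by positivity)]
      have h2 := rpow_one_add_le_one_add_mul_self (s := 1 / (k : ℝ))
        (by have : 0 < 1 / (k : ℝ) := by positivity
            linarith) hp0.le hp1
      have h3 : p * (1 / (k : ℝ)) = p / k := by ring
      rw [h3] at h2
      gcongr
    have e2 : ((k : ℝ) + 1) ^ (1 + p) ≤ (k : ℝ) ^ p * (k + 1 + 2 * p) := by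
      rw [Real.rpow_add (by positivity), Real.rpow_one]
      have h4 : p / k ≤ p := div_le_self hp0.le hk1
      have h5 : ((k : ℝ) + 1) * (1 + p / k) = k + 1 + p + p / k := by field_simp; ring
      calc ((k : ℝ) + 1) * ((k : ℝ) + 1) ^ p
          ≤ ((k : ℝ) + 1) * ((k : ℝ) ^ p * (1 + p / k)) := by gcongr
        _ = (k : ℝ) ^ p * (((k : ℝ) + 1) * (1 + p / k)) := by ring
        _ ≤ _ := by
          rw [h5]
          apply mul_le_mul_of_nonneg_left _ hq.le
          linarith
    have e3 : (k : ℝ) ^ (1 + p) = k * (k : ℝ) ^ p := by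
      rw [Real.rpow_add hk0, Real.rpow_one]
    push_cast
    rw [e3] at ih
    nlinarith [mul_pos hp0 hq]

theorem aux_bath (a Λ : ℕ → ℝ) (m : ℕ) (ha0 : ∀ i, 0 ≤ a i) (ha1 : ∀ i, a i ≤ 1)
    (has : HasSum a m) (hΛ0 : ∀ i, 0 ≤ Λ i) (hΛ : Monotone Λ) :
    ENNReal.ofReal (∑ i ∈ Finset.range m, Λ i) ≤ ∑' i, ENNReal.ofReal (Λ i * a i) := by
  have hL := hΛ0 m
  have key : ∀ i, (if i ∈ Finset.range m then ENNReal.ofReal (Λ i) else 0)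
        + ENNReal.ofReal (Λ m * a i)
      ≤ ENNReal.ofReal (Λ i * a i)
        + (if i ∈ Finset.range m then ENNReal.ofReal (Λ m) else 0) := by
    intro i
    have h0 := ha0 i
    have h1 := ha1 i
    have hi := hΛ0 i
    split_ifs with h
    · have := hΛ (Finset.mem_range.1 h).le
      rw [← ENNReal.ofReal_add hi (by positivity), ← ENNReal.ofReal_add (by positivity) hL]
      apply ENNReal.ofReal_le_ofReal
      nlinarith
    · have := hΛ (not_lt.1 (fun h' => h (Finset.mem_range.2 h')))
      rw [zero_add, add_zero]
      apply ENNReal.ofReal_le_ofReal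
      gcongr
  have hs := ENNReal.tsum_le_tsum key
  rw [ENNReal.tsum_add, ENNReal.tsum_add] at hs
  have f1 : ∀ f : ℕ → ENNReal, ∑' i, (if i ∈ Finset.range m then f i else 0)
      = ∑ i ∈ Finset.range m, f i := by
    intro f
    rw [tsum_eq_sum (s := Finset.range m)]
    · exact Finset.sum_congr rfl (fun i hi => if_pos hi)
    · intro i hi
      exact if_neg hi
  have f2 : ∑' i, ENNReal.ofReal (Λ m * a i) = ENNReal.ofReal (Λ m * m) := by
    rw [← (has.mul_left (Λ m)).tsum_eq]
    exact (ENNReal.ofReal_tsum_of_nonneg (fun i => mul_nonneg hL (ha0 i))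
      (has.mul_left (Λ m)).summable).symm
  rw [f1 (fun i => ENNReal.ofReal (Λ i)), f1 (fun _ => ENNReal.ofReal (Λ m)), f2,
    ← ENNReal.ofReal_sum_of_nonneg (fun i _ => hΛ0 i),
    ← ENNReal.ofReal_sum_of_nonneg (fun i _ => hL)] at hs
  simp only [Finset.sum_const, Finset.card_range, nsmul_eq_mul] at hs
  rw [mul_comm (m : ℝ)] at hs
  exact (ENNReal.add_le_add_iff_right ENNReal.ofReal_ne_top).1 hs

/-- Abstract Lieb–Thirring type inequality: if `(e i)` is a Hilbert basis of a real
Hilbert space `H`, `n ≥ 2`, `C > 0`, and `Λ : ℕ → ℝ` is nonnegative, monotone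
nondecreasing with `Λ i ≥ C * i^(1/(n-1))`, then for every orthonormal family
`ω : Fin m → H`,
`∑ j, ∑' i, Λ i * ⟪ω j, e i⟫² ≥ ((n-1)/(4n)) * C * (m^(1 + 1/(n-1)) - m)`. -/
theorem stmt2 {H : Type*} [NormedAddCommGroup H] [InnerProductSpace ℝ H]
    (e : HilbertBasis ℕ ℝ H) (n : ℕ) (hn : 2 ≤ n) (C : ℝ) (hC : 0 < C)
    (Λ : ℕ → ℝ) (hΛ0 : ∀ i, 0 ≤ Λ i) (hΛ : Monotone Λ)
    (hΛC : ∀ i : ℕ, C * (i : ℝ) ^ (1 / ((n : ℝ) - 1)) ≤ Λ i)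
    (m : ℕ) (ω : Fin m → H) (hω : Orthonormal ℝ ω) :
    ENNReal.ofReal ((((n : ℝ) - 1) / (4 * n)) * C *
        ((m : ℝ) ^ (1 + 1 / ((n : ℝ) - 1)) - m)) ≤
      ∑ j, ∑' i, ENNReal.ofReal (Λ i * ⟪ω j, e i⟫ ^ 2) := by
  have hn' : (2 : ℝ) ≤ n := by exact_mod_cast hn
  have hn1 : (0 : ℝ) < (n : ℝ) - 1 := by linarith
  have hb := aux_bath (fun i => ∑ j, ⟪ω j, e i⟫ ^ 2) Λ m
    (fun i => Finset.sum_nonneg (fun j _ => sq_nonneg _))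
    (fun i => by
      have h := hω.sum_inner_products_le (e i) (s := Finset.univ)
      rw [e.orthonormal.1 i] at h
      simpa using h)
    (by
      have h : ∀ j ∈ (Finset.univ : Finset (Fin m)),
          HasSum (fun i => ⟪ω j, e i⟫ ^ 2) 1 := by
        intro j _
        have h := e.hasSum_inner_mul_inner (ω j) (ω j)
        rw [real_inner_self_eq_norm_sq, hω.1 j, one_pow] at h
        refine h.congr_fun ?_
        intro i
        rw [real_inner_comm (ω j) (e i), sq]
      simpa using hasSum_sum h) hΛ0 hΛ
  have hswap : ∑' i, ENNReal.ofReal (Λ i * ∑ j, ⟪ω j, e i⟫ ^ 2)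
      = ∑ j, ∑' i, ENNReal.ofReal (Λ i * ⟪ω j, e i⟫ ^ 2) := by
    rw [← Summable.tsum_finsetSum (fun _ _ => ENNReal.summable)]
    refine tsum_congr (fun i => ?_)
    rw [Finset.mul_sum, ENNReal.ofReal_sum_of_nonneg]
    exact fun j _ => mul_nonneg (hΛ0 i) (sq_nonneg _)
  rw [← hswap]
  refine le_trans (ENNReal.ofReal_le_ofReal ?_) hb
  have hp1 : 1 / ((n : ℝ) - 1) ≤ 1 := by
    rw [div_le_one hn1]
    linarith
  have hs := aux_sum (1 / ((n : ℝ) - 1)) (by positivity) hp1 m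
  have hle : C * ∑ i ∈ Finset.range m, (i : ℝ) ^ (1 / ((n : ℝ) - 1))
      ≤ ∑ i ∈ Finset.range m, Λ i := by
    rw [Finset.mul_sum]
    exact Finset.sum_le_sum (fun i _ => hΛC i)
  refine le_trans ?_ hle
  have hc : 0 ≤ (((n : ℝ) - 1) / (4 * n)) * C := by positivity
  refine (mul_le_mul_of_nonneg_left hs hc).trans (le_of_eq ?_)
  have hne : (n : ℝ) - 1 ≠ 0 := hn1.ne'
  have hc2 : (((n : ℝ) - 1) / (4 * n)) * (4 * (1 + 1 / ((n : ℝ) - 1))) = 1 := by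
    have : (n : ℝ) ≠ 0 := by linarith
    field_simp
    ring
  generalize (∑ i ∈ Finset.range m, (i : ℝ) ^ (1 / ((n : ℝ) - 1))) = S
  linear_combination C * S * hc2
end

section
/- Let q ≥ 0 and c ≥ 1 be real numbers and let (a_k)_{k≥1} be a sequence of nonnegative real numbers satisfying a_k ≤ c * 2^{q k} * (a_{k-1} + 1)² for all k ≥ 2. Then for every k ≥ 1 one has a_k ≤ (2c * 8^q * (a_1 + 1))^{2^{k-1}}; in particular, the sequence (a_k)^{2^{-k}} is bounded above by (2c * 8^q * (a_1 + 1))^{1/2}. -/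
/-- Abstract Alikakos–Moser iteration lemma: if `q ≥ 0`, `c ≥ 1` and the nonnegative
sequence `a` satisfies `a k ≤ c * 2^(q k) * (a (k-1) + 1)^2` for `k ≥ 2`, then
`a k ≤ (2c * 8^q * (a 1 + 1))^(2^(k-1))` for all `k ≥ 1`; in particular
`(a k)^(2^(-k)) ≤ (2c * 8^q * (a 1 + 1))^(1/2)`. -/
theorem stmt4 (q c : ℝ) (hq : 0 ≤ q) (hc : 1 ≤ c) (a : ℕ → ℝ)
    (ha0 : ∀ k, 0 ≤ a k)
    (hrec : ∀ k, 2 ≤ k → a k ≤ c * (2 : ℝ) ^ (q * (k : ℝ)) * (a (k - 1) + 1) ^ 2) :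
    ∀ k, 1 ≤ k →
      a k ≤ (2 * c * (8 : ℝ) ^ q * (a 1 + 1)) ^ (2 ^ (k - 1)) ∧
      a k ^ ((2 : ℝ) ^ (-(k : ℝ))) ≤ (2 * c * (8 : ℝ) ^ q * (a 1 + 1)) ^ ((1 : ℝ) / 2) := by
  obtain ⟨r, hr⟩ : ∃ r : ℝ, r = (2 : ℝ) ^ q := ⟨_, rfl⟩
  have hr1 : 1 ≤ r := by rw [hr]; exact Real.one_le_rpow (by norm_num) hq
  have h8 : (8 : ℝ) ^ q = r ^ 3 := by
    rw [hr, ← Real.rpow_natCast, ← Real.rpow_mul (by norm_num), mul_comm,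
      Real.rpow_mul (by norm_num)]
    norm_num
  have hpow : ∀ k : ℕ, (2 : ℝ) ^ (q * (k : ℝ)) = r ^ k := by
    intro k
    rw [hr, Real.rpow_mul (by norm_num), Real.rpow_natCast]
  rw [h8]
  have key : ∀ n : ℕ, 2 * c * r ^ (n + 3) * (a (n + 1) + 1)
      ≤ (2 * c * r ^ 3 * (a 1 + 1)) ^ (2 ^ n) := by
    intro n
    induction n with
    | zero => simp
    | succ n ih =>
      have h := hrec (n + 2) (by omega)
      rw [hpow] at h
      have e : n + 2 - 1 = n + 1 := by omega
      rw [e] at h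
      have h0 := ha0 (n + 1)
      have hb : 1 ≤ (a (n + 1) + 1) ^ 2 := one_le_pow₀ (by linarith)
      have hrn : 1 ≤ r ^ (n + 2) := one_le_pow₀ hr1
      have hcr : 1 ≤ c * r ^ (n + 2) := one_le_mul_of_one_le_of_one_le hc hrn
      have h1 : 1 ≤ c * r ^ (n + 2) * (a (n + 1) + 1) ^ 2 :=
        one_le_mul_of_one_le_of_one_le hcr hb
      have hpos : 0 ≤ 2 * c * r ^ (n + 1 + 3) := by positivity
      calc 2 * c * r ^ (n + 1 + 3) * (a (n + 1 + 1) + 1)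
          ≤ 2 * c * r ^ (n + 1 + 3) * (2 * (c * r ^ (n + 2) * (a (n + 1) + 1) ^ 2)) :=
            mul_le_mul_of_nonneg_left (by linarith) hpos
        _ = (2 * c * r ^ (n + 3) * (a (n + 1) + 1)) ^ 2 := by ring
        _ ≤ ((2 * c * r ^ 3 * (a 1 + 1)) ^ (2 ^ n)) ^ 2 :=
            pow_le_pow_left₀ (by positivity) ih 2
        _ = _ := by rw [← pow_mul, pow_succ 2 n]
  intro k hk
  obtain ⟨n, rfl⟩ : ∃ n, k = n + 1 := ⟨k - 1, by omega⟩
  have hM : 0 ≤ 2 * c * r ^ 3 * (a 1 + 1) := by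
    have := ha0 1
    positivity
  have hmain : a (n + 1) ≤ (2 * c * r ^ 3 * (a 1 + 1)) ^ (2 ^ n) := by
    refine le_trans ?_ (key n)
    have h0 := ha0 (n + 1)
    have h1 : 1 ≤ 2 * c * r ^ (n + 3) :=
      one_le_mul_of_one_le_of_one_le (by linarith) (one_le_pow₀ hr1)
    nlinarith
  rw [Nat.add_sub_cancel]
  refine ⟨hmain, ?_⟩
  refine (Real.rpow_le_rpow (ha0 _) hmain (by positivity)).trans (le_of_eq ?_)
  rw [← Real.rpow_natCast, ← Real.rpow_mul hM]
  congr 1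
  rw [Real.rpow_neg (by norm_num), Real.rpow_natCast]
  push_cast
  rw [pow_succ]
  field_simp
end
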